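/- Let G be a connected simple bipartite graph with girth at least 6 whose maximum degree Δ satisfies Δ ≥ 3. Then χ_D(G) ≤ Δ + 1; that is, there exists a proper vertex coloring c : V(G) → Fin (Δ + 1) such that the only automorphism φ of G satisfying c ∘ φ = c is the identity. -/

import Mathlib

/-!
Let `r` be a vertex of maximum degree `D`, and arrange the vertices in layers by their distance from
`r`. Two colours of `D + 1` play a special role: the colour `base` of `r`, and `mark`, which no
neighbour of `r` receives. The neighbours of `r` thus share `D - 1` colours, and just two of them,
`left` and `right`, agree. One child of `left`, the `witness`, is coloured `base`, and a child of
the witness is coloured `mark`. The other vertices are coloured greedily, first those at distance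
two adjacent to that child and then layer by layer, so that siblings with no second parent differ
and `base` is used only when every other colour is blocked.

A vertex with a single parent competes with that parent and with at most `D - 2` siblings, or, if it
is coloured in the first round, only with its parent and the vertex coloured `mark` by hand, so it
never has to take `base`. A vertex with several parents that does take `base` has all other colours,
`mark` included, among its neighbours. So every vertex coloured `base` other than `r` has a
neighbour coloured `mark`, unless it is the witness and has no child, which leaves it only one
neighbour. As no neighbour of `r` is coloured `mark`, colour-preserving automorphisms fix `r`. In
the absence of 4-cycles, the vertices at distance two have a single parent, so the witness is the
only one coloured `base`, which separates `left` from `right`. Every further vertex is determined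
either by two of its parents, again because there are no 4-cycles, or by its colour among the
children of its only parent.
-/

lemma exists_linearOrder_wellFoundedLT_monotone {V α : Type*} [LinearOrder α] [WellFoundedLT α]
    (key : V → α) : ∃ _ : LinearOrder V, WellFoundedLT V ∧ Monotone key := by
  obtain ⟨_, _⟩ := exists_wellFoundedLT V
  let rank : V → α ×ₗ V := fun v ↦ toLex (key v, v)
  have rank_injective : rank.Injective := fun u v h ↦ congrArg (fun p ↦ (ofLex p).2) h
  refine ⟨LinearOrder.lift' rank rank_injective, ⟨InvImage.wf rank wellFounded_lt⟩, ?_⟩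
  exact fun u v huv ↦ Prod.Lex.monotone_fst_ofLex (show rank u ≤ rank v from huv)

lemma exists_forall_eq_image_of_forall_lt {V C : Type*} [Preorder V] [WellFoundedLT V]
    (pick : V → Set C → C) {E : V → Set V} (hE : ∀ v, ∀ u ∈ E v, u < v) :
    ∃ c : V → C, ∀ v, c v = pick v (c '' E v) := by
  refine ⟨wellFounded_lt.fix fun v c ↦ pick v (Set.range fun u : E v ↦ c u (hE v u u.2)),
    fun v ↦ ?_⟩
  rw [WellFounded.fix_eq, Set.image_eq_range]

lemma exists_ne_notMem_of_encard_add_one_lt {C : Type*} {A : Set C}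
    (hA : A.encard + 1 < ENat.card C) (z : C) : ∃ a, a ≠ z ∧ a ∉ A := by
  by_contra! h
  have huniv : (Set.univ : Set C) ⊆ insert z A := fun a _ ↦ by
    simpa only [Set.mem_insert_iff] using or_iff_not_imp_left.2 (h a)
  have hcard := (Set.encard_le_encard huniv).trans (Set.encard_insert_le A z)
  rw [Set.encard_univ] at hcard
  exact hA.not_ge hcard

lemma exists_reluctant_choice {C : Type*} (z : C) :
    ∃ pick : Set C → C, ∀ A, (A ≠ Set.univ → pick A ∉ A) ∧ (pick A = z → ∀ a ≠ z, a ∈ A) := by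
  suffices h : ∀ A : Set C, ∃ p, (A ≠ Set.univ → p ∉ A) ∧ (p = z → ∀ a ≠ z, a ∈ A) from
    Classical.axiomOfChoice h
  intro A
  by_cases hA : ∃ a, a ≠ z ∧ a ∉ A
  · obtain ⟨a, haz, haA⟩ := hA
    exact ⟨a, fun _ ↦ haA, fun h ↦ absurd h haz⟩
  · push Not at hA
    refine ⟨z, fun hne hz ↦ hne (Set.eq_univ_of_forall fun a ↦ ?_), fun _ ↦ hA⟩
    rcases eq_or_ne a z with rfl | ha
    exacts [hz, hA a ha]

/-- The neighbours of `v` in `H` that a greedy colouring along `<` meets before `v`. -/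
def earlierNeighbors {V : Type*} [LT V] (H : SimpleGraph V) (v : V) : Set V :=
  {u | u < v ∧ H.Adj u v}

lemma exists_reluctant_greedy_coloring {V C : Type*} [LinearOrder V] [WellFoundedLT V]
    (H : SimpleGraph V) {S : Set V} (hS : IsLowerSet S) (g : V → C) (z : C)
    (hH : ∀ v ∉ S, (earlierNeighbors H v).encard < ENat.card C) :
    ∃ c : V → C, Set.EqOn c g S ∧ (∀ u v, H.Adj u v → v ∉ S → c u ≠ c v) ∧
      ∀ v ∉ S, c v = z → ∀ a ≠ z, a ∈ c '' earlierNeighbors H v := by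
  classical
  obtain ⟨pick, hpick⟩ := exists_reluctant_choice z
  obtain ⟨c, hc⟩ := exists_forall_eq_image_of_forall_lt
    (fun v A ↦ if v ∈ S then g v else pick A) (E := earlierNeighbors H) fun _ _ hu ↦ hu.1
  have hcS : ∀ v ∉ S, c v = pick (c '' earlierNeighbors H v) := fun v hv ↦ by
    rw [hc v, if_neg hv]
  have hearlier : ∀ v ∉ S, ∀ u ∈ earlierNeighbors H v, c u ≠ c v := by
    intro v hv u hu huv
    refine (hpick (c '' earlierNeighbors H v)).1 (fun huniv ↦ ?_) (hcS v hv ▸ huv ▸ ⟨u, hu, rfl⟩)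
    have hcard := Set.encard_image_le c (earlierNeighbors H v)
    rw [huniv, Set.encard_univ] at hcard
    exact (hH v hv).not_ge hcard
  refine ⟨c, fun v hv ↦ (hc v).trans (if_pos hv), fun u v huv hv ↦ ?_, fun v hv hz ↦ ?_⟩
  · rcases huv.ne.lt_or_gt with hlt | hlt
    · exact hearlier v hv u ⟨hlt, huv⟩
    · exact (hearlier u (fun hu ↦ hv (hS hlt.le hu)) v ⟨hlt, huv.symm⟩).symm
  · exact (hpick _).2 ((hcS v hv).symm.trans hz)

lemma exists_mapsTo_eq_or_of_encard_le {V C : Type*} [Nonempty C] {S : Set V} {T : Set C}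
    (hS : S.Finite) (hcard : S.encard ≤ T.encard + 1) {a b : V} (ha : a ∈ S) (hb : b ∈ S)
    (hab : a ≠ b) :
    ∃ h : V → C, Set.MapsTo h S T ∧ ∀ u ∈ S, ∀ v ∈ S, h u = h v → u = v ∨ s(u, v) = s(a, b) := by
  classical
  have hle : (S \ {b}).encard ≤ T.encard := by
    rw [← Set.encard_sdiff_singleton_add_one hb] at hcard
    exact (ENat.add_le_add_iff_right ENat.one_ne_top).1 hcard
  obtain ⟨f, hfT, hf⟩ := Set.Finite.exists_injOn_of_encard_le (hS.sdiff (t := {b})) hle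
  let merge : V → V := Function.update id b a
  have hmerge : ∀ u ∈ S, merge u ∈ S \ {b} := by
    intro u hu
    rcases eq_or_ne u b with rfl | hub <;> simp [merge, *]
  refine ⟨f ∘ merge, fun u hu ↦ hfT (hmerge u hu), fun u hu v hv huv ↦ ?_⟩
  have heq : merge u = merge v := hf (hmerge u hu) (hmerge v hv) huv
  by_cases hub : u = b <;> by_cases hvb : v = b <;> simp_all [merge]

lemma pairwise_subsingleton_commonNeighbors {V : Type*} {G : SimpleGraph V}
    (hG : 4 < G.egirth) : Pairwise fun a b ↦ (G.commonNeighbors a b).Subsingleton := by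
  rintro a b hab u ⟨hau, hbu⟩ v ⟨hav, hbv⟩
  rw [SimpleGraph.mem_neighborSet] at hau hbu hav hbv
  by_contra huv
  let w : G.Walk a a := .cons hau (.cons hbu.symm (.cons hbv (.cons hav.symm .nil)))
  have hw : w.IsCycle := by
    rw [SimpleGraph.Walk.cons_isCycle_iff]
    have := hau.ne
    have := hav.ne
    have := hbu.ne
    have := hbv.ne
    constructor
    · simp only [SimpleGraph.Walk.isPath_def, SimpleGraph.Walk.support_cons,
        SimpleGraph.Walk.support_nil]
      grind
    · simp only [SimpleGraph.Walk.edges_cons, SimpleGraph.Walk.edges_nil]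
      grind
  exact hG.not_ge (SimpleGraph.egirth_le_length hw)

lemma encard_neighborSet_eq_degree {V : Type*} (G : SimpleGraph V) (v : V)
    [Fintype (G.neighborSet v)] : (G.neighborSet v).encard = G.degree v := by
  rw [← G.coe_neighborFinset, Set.encard_coe_eq_coe_finsetCard, G.card_neighborFinset_eq_degree]

lemma dist_apply_of_apply_eq_self {V : Type*} {G : SimpleGraph V} {r : V} (hconn : G.Connected)
    {φ : G ≃g G} (hφ : φ r = r) (v : V) : G.dist r (φ v) = G.dist r v := by
  have hle : ∀ ψ : G ≃g G, ψ r = r → ∀ v, G.dist r (ψ v) ≤ G.dist r v := by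
    intro ψ hψ v
    obtain ⟨p, hp⟩ := hconn.exists_walk_length_eq_dist r v
    have h := SimpleGraph.dist_le (p.map ψ.toHom)
    rwa [SimpleGraph.Walk.length_map, hp, show ψ.toHom r = r from hψ] at h
  refine le_antisymm (hle φ hφ v) ?_
  have h := hle φ.symm (by rw [RelIso.symm_apply_eq, hφ]) (φ v)
  rwa [φ.symm_apply_apply] at h

/-- In the layering of `G` by the distance from the root `r`, the vertex `p` is a neighbour of `v`
in the layer just below that of `v`. -/
def IsParent {V : Type*} (G : SimpleGraph V) (r p v : V) : Prop :=
  G.Adj p v ∧ G.dist r v = G.dist r p + 1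

/-- `v` has at most one parent; in a connected graph, only the root has none. -/
def HasUniqueParent {V : Type*} (G : SimpleGraph V) (r v : V) : Prop :=
  {p | IsParent G r p v}.Subsingleton

/-- Distinct vertices with a common parent and no other parent. Vertices with several parents are
left out: in a graph without 4-cycles, their parents already determine them. -/
def IsSibling {V : Type*} (G : SimpleGraph V) (r u v : V) : Prop :=
  u ≠ v ∧ HasUniqueParent G r u ∧ HasUniqueParent G r v ∧ ∃ p, IsParent G r p u ∧ IsParent G r p v

/-- Joins the pairs of vertices that a colouring has to tell apart: neighbours and siblings. -/
def conflictGraph {V : Type*} (G : SimpleGraph V) (r : V) : SimpleGraph V where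
  Adj u v := G.Adj u v ∨ IsSibling G r u v
  symm := ⟨by
    rintro u v (h | ⟨hne, hu, hv, p, hpu, hpv⟩)
    exacts [.inl h.symm, .inr ⟨hne.symm, hv, hu, p, hpv, hpu⟩]⟩
  loopless := ⟨fun v h ↦ h.elim G.irrefl fun h ↦ h.1 rfl⟩

section Layers

variable {V : Type*} {G : SimpleGraph V} {r : V}

lemma exists_isParent (hconn : G.Connected) {v : V} (hv : v ≠ r) : ∃ p, IsParent G r p v := by
  obtain ⟨w, hw⟩ := hconn.exists_walk_length_eq_dist r v
  have hnil : ¬ w.Nil := SimpleGraph.Walk.not_nil_of_ne hv.symm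
  have hadj := w.adj_penultimate hnil
  refine ⟨w.penultimate, hadj, le_antisymm ?_ ?_⟩
  · calc G.dist r v ≤ G.dist r w.penultimate + G.dist w.penultimate v := hconn.dist_triangle
      _ = G.dist r w.penultimate + 1 := by rw [SimpleGraph.dist_eq_one_iff_adj.2 hadj]
  · calc G.dist r w.penultimate + 1 ≤ w.dropLast.length + 1 :=
          Nat.add_le_add_right (SimpleGraph.dist_le _) 1
      _ = G.dist r v := by rw [SimpleGraph.Walk.length_dropLast_add_one hnil, hw]

lemma isParent_or_isParent (hconn : G.Connected) (hbip : G.Colorable 2) {u v : V}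
    (huv : G.Adj u v) : IsParent G r u v ∨ IsParent G r v u := by
  obtain ⟨p, hp⟩ := hconn.exists_walk_length_eq_dist r u
  obtain ⟨q, hq⟩ := hconn.exists_walk_length_eq_dist r v
  have heven := SimpleGraph.two_colorable_iff_forall_loop_even.1 hbip r
    (p.append (.cons huv q.reverse))
  rw [SimpleGraph.Walk.length_append, SimpleGraph.Walk.length_cons,
    SimpleGraph.Walk.length_reverse, hp, hq] at heven
  have hne : G.dist r u ≠ G.dist r v := fun h ↦ by
    rw [h, ← add_assoc] at heven
    exact Nat.not_even_two_mul_add_one (G.dist r v) (by rwa [two_mul])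
  rcases huv.diff_dist_adj (u := r) with h | h | h
  · exact absurd h.symm hne
  · exact .inl ⟨huv, h⟩
  · exact .inr ⟨huv.symm, by omega⟩

lemma IsParent.map {φ : G ≃g G} (hconn : G.Connected) (hφ : φ r = r) {p v : V}
    (h : IsParent G r p v) : IsParent G r (φ p) (φ v) :=
  ⟨φ.map_adj_iff.2 h.1, by
    rw [dist_apply_of_apply_eq_self hconn hφ, dist_apply_of_apply_eq_self hconn hφ, h.2]⟩

lemma HasUniqueParent.map {φ : G ≃g G} (hconn : G.Connected) (hφ : φ r = r) {v : V}
    (h : HasUniqueParent G r v) : HasUniqueParent G r (φ v) := by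
  have hback : ∀ p, IsParent G r p (φ v) → IsParent G r (φ.symm p) v := fun p hp ↦ by
    simpa only [φ.symm_apply_apply] using
      hp.map hconn (φ := φ.symm) (by rw [RelIso.symm_apply_eq, hφ])
  exact fun p hp q hq ↦ φ.symm.injective (h (hback p hp) (hback q hq))

lemma eq_self_of_forall_not_isSibling (hconn : G.Connected)
    (hC4 : Pairwise fun a b ↦ (G.commonNeighbors a b).Subsingleton) {φ : G ≃g G} (hφ : φ r = r)
    (hsib : ∀ v, ¬ IsSibling G r (φ v) v) (v : V) : φ v = v := by
  induction hn : G.dist r v using Nat.strong_induction_on generalizing v with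
  | _ n ih =>
    have hparent : ∀ p, IsParent G r p v → IsParent G r p (φ v) := fun p hp ↦ by
      have hlt : G.dist r p < n := by have := hp.2; omega
      simpa only [ih _ hlt p rfl] using hp.map hconn hφ
    rcases eq_or_ne v r with rfl | hvr
    · exact hφ
    by_cases huniq : HasUniqueParent G r v
    · obtain ⟨p, hp⟩ := exists_isParent hconn hvr
      by_contra hne
      exact hsib v ⟨hne, huniq.map hconn hφ, huniq, p, hparent p hp, hp⟩
    · obtain ⟨p, hp, q, hq, hpq⟩ := Set.not_subsingleton_iff.1 huniq
      exact hC4 hpq ⟨(hparent p hp).1, (hparent q hq).1⟩ ⟨hp.1, hq.1⟩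

lemma hasUniqueParent_of_dist_eq_two
    (hC4 : Pairwise fun a b ↦ (G.commonNeighbors a b).Subsingleton) {v : V}
    (hv : G.dist r v = 2) : HasUniqueParent G r v := by
  have hadj : ∀ p, IsParent G r p v → G.Adj r p := fun p hp ↦
    SimpleGraph.dist_eq_one_iff_adj.1 (by have := hp.2; omega)
  have hrv : r ≠ v := by
    rintro rfl
    simp only [SimpleGraph.dist_self, OfNat.zero_ne_ofNat] at hv
  exact fun p hp q hq ↦ hC4 hrv ⟨hadj p hp, hp.1.symm⟩ ⟨hadj q hq, hq.1.symm⟩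

lemma IsSibling.dist_eq {u v : V} (h : IsSibling G r u v) : G.dist r u = G.dist r v := by
  obtain ⟨-, -, -, p, hpu, hpv⟩ := h
  rw [hpu.2, hpv.2]

lemma earlierNeighbors_subset_of_not_hasUniqueParent [LT V] {v : V}
    (hv : ¬ HasUniqueParent G r v) :
    earlierNeighbors (conflictGraph G r) v ⊆ G.neighborSet v :=
  fun _ hu ↦ (hu.2.resolve_right fun h ↦ hv h.2.2.1).symm

lemma eq_or_adj_of_forall_dist_ne_two (hconn : G.Connected) (h : ∀ v, G.dist r v ≠ 2) (v : V) :
    v = r ∨ G.Adj r v := by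
  induction hn : G.dist r v generalizing v with
  | zero => exact .inl (hconn.dist_eq_zero_iff.1 hn).symm
  | succ n ih =>
    refine or_iff_not_imp_left.2 fun hvr ↦ ?_
    obtain ⟨p, hp⟩ := exists_isParent hconn hvr
    rcases ih p (by have := hp.2; omega) with rfl | hrp
    · exact hp.1
    · exact absurd (by rw [hp.2, SimpleGraph.dist_eq_one_iff_adj.2 hrp]) (h v)

lemma exists_injective_of_forall_dist_ne_two [Fintype (G.neighborSet r)] (hconn : G.Connected)
    (h : ∀ v, G.dist r v ≠ 2) : ∃ c : V → Fin (G.degree r + 1), c.Injective := by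
  have huniv : (Set.univ : Set V) ⊆ insert r (G.neighborSet r) := fun v _ ↦
    eq_or_adj_of_forall_dist_ne_two hconn h v
  have hfin : (Set.univ : Set V).Finite := ((G.neighborSet r).toFinite.insert r).subset huniv
  have hcard : (Set.univ : Set V).encard ≤ (Set.univ : Set (Fin (G.degree r + 1))).encard :=
    calc (Set.univ : Set V).encard ≤ (G.neighborSet r).encard + 1 :=
          (Set.encard_le_encard huniv).trans (Set.encard_insert_le _ _)
      _ = (Set.univ : Set (Fin (G.degree r + 1))).encard := by
          rw [encard_neighborSet_eq_degree, Set.encard_univ, ENat.card_eq_coe_fintype_card,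
            Fintype.card_fin, Nat.cast_add_one]
  obtain ⟨c, -, hc⟩ := hfin.exists_injOn_of_encard_le hcard
  exact ⟨c, Set.injOn_univ.1 hc⟩

end Layers

/-- The data that the colouring is built around: two neighbours `left` and `right` of the root,
which will share a colour; a child `witness` of `left`, which will be coloured like the root and so
tells `left` from `right`; and the set `marked` consisting of one child of `witness`, or empty if
`witness` has no child, which tells `witness` from the root. -/
structure Seed {V : Type*} (G : SimpleGraph V) (r : V) where
  left : V
  right : V
  witness : V
  marked : Set V
  adj_left : G.Adj r left
  adj_right : G.Adj r right
  left_ne_right : left ≠ right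
  isParent_witness : IsParent G r left witness
  isParent_marked : ∀ y ∈ marked, IsParent G r witness y
  marked_subsingleton : marked.Subsingleton
  marked_nonempty : ∀ v, IsParent G r witness v → marked.Nonempty

lemma exists_seed {V : Type*} {G : SimpleGraph V} {r x : V} (hconn : G.Connected)
    (hr : (G.neighborSet r).Nontrivial) (hx : G.dist r x = 2) : Nonempty (Seed G r) := by
  have hxr : x ≠ r := by
    rintro rfl
    simp only [SimpleGraph.dist_self, OfNat.zero_ne_ofNat] at hx
  obtain ⟨l, hl⟩ := exists_isParent hconn hxr
  have hrl : G.Adj r l := SimpleGraph.dist_eq_one_iff_adj.1 (by have := hl.2; omega)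
  obtain ⟨m, hrm, hml⟩ := hr.exists_ne l
  obtain ⟨Y, hY, hYsub, hYne⟩ : ∃ Y ⊆ {y | IsParent G r x y}, Y.Subsingleton ∧
      ∀ v, IsParent G r x v → Y.Nonempty := by
    by_cases h : ∃ y, IsParent G r x y
    · obtain ⟨y, hy⟩ := h
      exact ⟨{y}, Set.singleton_subset_iff.2 hy, Set.subsingleton_singleton, fun _ _ ↦ ⟨y, rfl⟩⟩
    · exact ⟨∅, Set.empty_subset _, Set.subsingleton_empty, fun v hv ↦ absurd ⟨v, hv⟩ h⟩
  exact ⟨⟨l, m, x, Y, hrl, hrm, hml.symm, hl, hY, hYsub, hYne⟩⟩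

namespace Seed

variable {V : Type*} {G : SimpleGraph V} {r : V}

/-- The vertices coloured by hand, before the greedy colouring starts. -/
def support (s : Seed G r) : Set V :=
  {v | v = r ∨ G.Adj r v ∨ v = s.witness ∨ v ∈ s.marked}

/-- The vertices two steps from the root adjacent to the marked vertex. They are coloured right
after the support, so as not to see both all their siblings and the marked vertex. -/
def nearMarked (s : Seed G r) : Set V :=
  {v | G.dist r v = 2 ∧ ∃ y ∈ s.marked, G.Adj v y}

open Classical in
/-- The colouring proceeds by increasing priority: support, neighbours of the marked vertex, then
layer by layer. -/
noncomputable def priority (s : Seed G r) (v : V) : ℕ :=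
  if v ∈ s.support then 0 else if v ∈ s.nearMarked then 1 else G.dist r v + 2

open Classical in
/-- The colouring of the support: `base` on the root and the witness, `mark` on the marked vertex,
and `h` on the neighbours of the root. -/
noncomputable def coloring {C : Type*} (s : Seed G r) (base mark : C) (h : V → C) (v : V) : C :=
  if G.Adj r v then h v else if v ∈ s.marked then mark else base

lemma dist_witness (s : Seed G r) : G.dist r s.witness = 2 := by
  rw [s.isParent_witness.2, SimpleGraph.dist_eq_one_iff_adj.2 s.adj_left]

lemma dist_marked (s : Seed G r) {y : V} (hy : y ∈ s.marked) : G.dist r y = 3 := by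
  rw [(s.isParent_marked y hy).2, s.dist_witness]

lemma eq_witness_or_mem_marked (s : Seed G r) {v : V} (hv : v ∈ s.support)
    (hdist : 2 ≤ G.dist r v) : v = s.witness ∨ v ∈ s.marked := by
  rcases hv with rfl | hrv | hv
  · rw [SimpleGraph.dist_self] at hdist
    omega
  · rw [SimpleGraph.dist_eq_one_iff_adj.2 hrv] at hdist
    omega
  · exact hv

lemma two_le_dist_of_notMem_support (s : Seed G r) (hconn : G.Connected) {v : V}
    (hv : v ∉ s.support) : 2 ≤ G.dist r v :=
  hconn.one_lt_dist_of_ne_of_not_adj (fun h ↦ hv (.inl h.symm)) fun h ↦ hv (.inr (.inl h))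

lemma not_isSibling_of_mem_support (s : Seed G r) {u v : V} (hu : u ∈ s.support)
    (hv : v ∈ s.support) (hdist : 2 ≤ G.dist r v) : ¬ IsSibling G r u v := by
  intro h
  have hdist_eq := h.dist_eq
  rcases s.eq_witness_or_mem_marked hu (hdist_eq ▸ hdist) with rfl | hu <;>
    rcases s.eq_witness_or_mem_marked hv hdist with rfl | hv
  · exact h.1 rfl
  · rw [s.dist_witness, s.dist_marked hv] at hdist_eq
    omega
  · rw [s.dist_witness, s.dist_marked hu] at hdist_eq
    omega
  · exact h.1 (s.marked_subsingleton hu hv)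

lemma priority_eq_zero_iff (s : Seed G r) {v : V} : s.priority v = 0 ↔ v ∈ s.support := by
  unfold priority
  split_ifs <;> simp_all

lemma mem_support_or_mem_nearMarked (s : Seed G r) {u : V} (hu : s.priority u ≤ 1) :
    u ∈ s.support ∨ u ∈ s.nearMarked := by
  by_contra! h
  rw [priority, if_neg h.1, if_neg h.2] at hu
  omega

lemma priority_le_one (s : Seed G r) {v : V} (hv : v ∈ s.nearMarked) : s.priority v ≤ 1 := by
  rw [priority, if_pos hv]
  split_ifs <;> omega

lemma priority_le (s : Seed G r) (v : V) : s.priority v ≤ G.dist r v + 2 := by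
  unfold priority
  split_ifs <;> omega

section Order

variable [LinearOrder V] (s : Seed G r)

lemma isLowerSet_support (hmono : Monotone s.priority) : IsLowerSet s.support :=
  fun _ _ hle hv ↦ s.priority_eq_zero_iff.1
    (Nat.le_zero.1 ((hmono hle).trans_eq (s.priority_eq_zero_iff.2 hv)))

lemma isParent_of_lt (hconn : G.Connected) (hbip : G.Colorable 2) (hmono : Monotone s.priority)
    {u v : V} (hv : v ∉ s.support) (hnear : v ∉ s.nearMarked) (hlt : u < v) (huv : G.Adj u v) :
    IsParent G r u v := by
  refine (isParent_or_isParent hconn hbip huv).resolve_right fun hvu ↦ ?_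
  have hdist := hvu.2
  have hv2 := s.two_le_dist_of_notMem_support hconn hv
  by_cases hu : u ∈ s.support
  · rcases s.eq_witness_or_mem_marked hu (by omega) with rfl | hu
    · rw [s.dist_witness] at hdist
      omega
    · rw [s.dist_marked hu] at hdist
      exact hnear ⟨by omega, u, hu, huv.symm⟩
  · have hu' : u ∉ s.nearMarked := fun h ↦ by have := h.1; omega
    have hle := (hmono hlt.le).trans (s.priority_le v)
    rw [priority, if_neg hu, if_neg hu'] at hle
    omega

lemma earlierNeighbors_subset_of_mem_nearMarked (hconn : G.Connected) (hbip : G.Colorable 2)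
    (hC4 : Pairwise fun a b ↦ (G.commonNeighbors a b).Subsingleton) (hmono : Monotone s.priority)
    {v y p : V} (hv2 : G.dist r v = 2) (hy : y ∈ s.marked) (hvy : G.Adj v y)
    (hp : IsParent G r p v) : earlierNeighbors (conflictGraph G r) v ⊆ {p, y} := by
  rintro u ⟨hlt, huv⟩
  have hu := s.mem_support_or_mem_nearMarked
    ((hmono hlt.le).trans (s.priority_le_one ⟨hv2, y, hy, hvy⟩))
  have hmarked : G.dist r u = 3 → u = y := fun hu3 ↦ by
    rcases hu with hu | hu
    · rcases s.eq_witness_or_mem_marked hu (by omega) with rfl | hu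
      · rw [s.dist_witness] at hu3
        omega
      · exact s.marked_subsingleton hu hy
    · have := hu.1
      omega
  have hadj : G.dist r u = 2 → G.Adj u y := fun hu2 ↦ by
    rcases hu with hu | ⟨-, y', hy', huy'⟩
    · rcases s.eq_witness_or_mem_marked hu hu2.ge with rfl | hu
      · exact (s.isParent_marked y hy).1
      · rw [s.dist_marked hu] at hu2
        omega
    · exact s.marked_subsingleton hy' hy ▸ huy'
  rcases huv with huv | hsib
  · rcases isParent_or_isParent hconn hbip huv with hpar | hpar
    · exact .inl (hasUniqueParent_of_dist_eq_two hC4 hv2 hpar hp)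
    · exact .inr (hmarked (by rw [hpar.2, hv2]))
  · obtain ⟨q, hqu, hqv⟩ := hsib.2.2.2
    have hqy : q = y :=
      hC4 hsib.1 ⟨hqu.1.symm, hqv.1.symm⟩ ⟨hadj (hsib.dist_eq.trans hv2), hvy⟩
    have hq := hqv.2
    rw [hqy, hv2, s.dist_marked hy] at hq
    omega

lemma earlierNeighbors_subset_of_hasUniqueParent (hconn : G.Connected) (hbip : G.Colorable 2)
    (hmono : Monotone s.priority) {v p q : V} (hv : v ∉ s.support) (hnear : v ∉ s.nearMarked)
    (huniq : HasUniqueParent G r v) (hp : IsParent G r p v) (hq : IsParent G r q p) :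
    earlierNeighbors (conflictGraph G r) v ⊆ insert p ((G.neighborSet p \ {v}) \ {q}) := by
  rintro u ⟨hlt, huv | hsib⟩
  · exact .inl (huniq (s.isParent_of_lt hconn hbip hmono hv hnear hlt huv) hp)
  · have hdist := hsib.dist_eq
    obtain ⟨hne, -, -, p', hpu, hpv⟩ := hsib
    obtain rfl : p' = p := huniq hpv hp
    refine .inr ⟨⟨hpu.1, hne⟩, ?_⟩
    rintro rfl
    have := hpv.2
    have := hq.2
    omega

variable [G.LocallyFinite]

lemma encard_earlierNeighbors_lt_of_hasUniqueParent (hconn : G.Connected) (hbip : G.Colorable 2)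
    (hC4 : Pairwise fun a b ↦ (G.commonNeighbors a b).Subsingleton) (hmono : Monotone s.priority)
    {D : ℕ} (hD : 3 ≤ D) (hdeg : ∀ v, G.degree v ≤ D) {v : V} (hv : v ∉ s.support)
    (huniq : HasUniqueParent G r v) :
    (earlierNeighbors (conflictGraph G r) v).encard < D := by
  have hv2 := s.two_le_dist_of_notMem_support hconn hv
  obtain ⟨p, hp⟩ := exists_isParent hconn fun h ↦ hv (.inl h)
  by_cases hnear : v ∈ s.nearMarked
  · obtain ⟨hdist, y, hy, hvy⟩ := hnear
    have hsub := s.earlierNeighbors_subset_of_mem_nearMarked hconn hbip hC4 hmono hdist hy hvy hp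
    calc _ ≤ ({p, y} : Set V).encard := Set.encard_le_encard hsub
      _ ≤ 2 := (Set.encard_insert_le _ _).trans_eq
          (by rw [Set.encard_singleton, one_add_one_eq_two])
      _ < D := by exact_mod_cast hD
  · have hpr : p ≠ r := by
      rintro rfl
      have := hp.2
      rw [SimpleGraph.dist_self] at this
      omega
    obtain ⟨q, hq⟩ := exists_isParent hconn hpr
    have hqv : q ≠ v := by
      rintro rfl
      have := hp.2
      have := hq.2
      omega
    have hsub := s.earlierNeighbors_subset_of_hasUniqueParent hconn hbip hmono hv hnear huniq hp hq
    have hcard : ((G.neighborSet p \ {v}) \ {q}).encard + 1 + 1 ≤ D := by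
      rw [Set.encard_sdiff_singleton_add_one (by exact ⟨hq.1.symm, hqv⟩),
        Set.encard_sdiff_singleton_add_one (by exact hp.1), encard_neighborSet_eq_degree]
      exact_mod_cast hdeg p
    have hfin : ((G.neighborSet p \ {v}) \ {q}).encard + 1 ≠ ⊤ :=
      ne_top_of_le_ne_top (ENat.natCast_ne_top D) (le_self_add.trans hcard)
    calc _ ≤ ((G.neighborSet p \ {v}) \ {q}).encard + 1 :=
          (Set.encard_le_encard hsub).trans (Set.encard_insert_le _ _)
      _ < D := (ENat.add_one_le_iff hfin).1 hcard

lemma encard_earlierNeighbors_le (hconn : G.Connected) (hbip : G.Colorable 2)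
    (hC4 : Pairwise fun a b ↦ (G.commonNeighbors a b).Subsingleton) (hmono : Monotone s.priority)
    {D : ℕ} (hD : 3 ≤ D) (hdeg : ∀ v, G.degree v ≤ D) {v : V} (hv : v ∉ s.support) :
    (earlierNeighbors (conflictGraph G r) v).encard ≤ D := by
  by_cases huniq : HasUniqueParent G r v
  · exact (s.encard_earlierNeighbors_lt_of_hasUniqueParent hconn hbip hC4 hmono hD hdeg hv huniq).le
  · calc _ ≤ (G.neighborSet v).encard :=
          Set.encard_le_encard (earlierNeighbors_subset_of_not_hasUniqueParent huniq)
      _ = G.degree v := encard_neighborSet_eq_degree G v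
      _ ≤ D := by exact_mod_cast hdeg v

end Order

section Coloring

variable {C : Type*} {base mark : C}

/-- A proper colouring from which the root, then `left` and `right`, then everything else can be
recognised: `base` is the colour of the root and the witness, and every other vertex of that colour
has a neighbour coloured `mark`, unlike the root. -/
structure IsAdapted (s : Seed G r) (base mark : C) (c : V → C) : Prop where
  ne_of_adj : ∀ ⦃u v⦄, G.Adj u v → c u ≠ c v
  root : c r = base
  witness : c s.witness = base
  marked : ∀ y ∈ s.marked, c y = mark
  ne_mark : ∀ ⦃u⦄, G.Adj r u → c u ≠ mark
  eq_or_eq : ∀ ⦃u v⦄, G.Adj r u → G.Adj r v → c u = c v → u = v ∨ s(u, v) = s(s.left, s.right)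
  ne_of_isSibling : ∀ ⦃u v⦄, 2 ≤ G.dist r v → IsSibling G r u v → c u ≠ c v
  of_eq_base : ∀ ⦃v⦄, c v = base → v ≠ r → v ≠ s.witness →
    ¬ HasUniqueParent G r v ∧ ∃ u, G.Adj v u ∧ c u = mark

variable {s : Seed G r} {c : V → C} {φ : G ≃g G}

lemma IsAdapted.map_root (hc : s.IsAdapted base mark c) (hconn : G.Connected)
    (hbip : G.Colorable 2) (hC4 : Pairwise fun a b ↦ (G.commonNeighbors a b).Subsingleton)
    (hφ : c ∘ φ = c) : φ r = r := by
  have hmark : ∀ u, G.Adj (φ r) u → c u ≠ mark := fun u hu ↦ by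
    obtain ⟨u, rfl⟩ := φ.surjective u
    exact (congrFun hφ u).trans_ne (hc.ne_mark (φ.map_adj_iff.1 hu))
  by_contra hr
  by_cases hw : φ r = s.witness
  · by_cases hchild : ∃ v, IsParent G r s.witness v
    · obtain ⟨v, hv⟩ := hchild
      obtain ⟨y, hy⟩ := s.marked_nonempty v hv
      exact hmark y (hw ▸ (s.isParent_marked y hy).1) (hc.marked y hy)
    · have hparent : ∀ u, G.Adj r u → IsParent G r (φ u) s.witness := fun u hu ↦
        (isParent_or_isParent hconn hbip (hw ▸ φ.map_adj_iff.2 hu.symm)).resolve_right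
          fun h ↦ hchild ⟨_, h⟩
      exact s.left_ne_right (φ.injective (hasUniqueParent_of_dist_eq_two hC4 s.dist_witness
        (hparent _ s.adj_left) (hparent _ s.adj_right)))
  · obtain ⟨-, u, hu, hcu⟩ := hc.of_eq_base ((congrFun hφ r).trans hc.root) hr hw
    exact hmark u hu hcu

lemma IsAdapted.ne_base_of_adj_right (hc : s.IsAdapted base mark c)
    (hC4 : Pairwise fun a b ↦ (G.commonNeighbors a b).Subsingleton) {v : V}
    (hv : G.Adj s.right v) (hdist : G.dist r v = 2) : c v ≠ base := by
  intro hcv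
  have huniq := hasUniqueParent_of_dist_eq_two hC4 hdist
  have hvr : v ≠ r := by
    rintro rfl
    simp only [SimpleGraph.dist_self, OfNat.zero_ne_ofNat] at hdist
  refine (hc.of_eq_base hcv hvr ?_).1 huniq
  rintro rfl
  refine s.left_ne_right (huniq s.isParent_witness ⟨hv, ?_⟩)
  rw [hdist, SimpleGraph.dist_eq_one_iff_adj.2 s.adj_right]

lemma IsAdapted.map_left_ne_right (hc : s.IsAdapted base mark c) (hconn : G.Connected)
    (hC4 : Pairwise fun a b ↦ (G.commonNeighbors a b).Subsingleton) (hφ : c ∘ φ = c)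
    (hr : φ r = r) : φ s.left ≠ s.right := by
  intro hlr
  refine hc.ne_base_of_adj_right hC4 (v := φ s.witness) ?_ ?_
    ((congrFun hφ s.witness).trans hc.witness)
  · exact hlr ▸ φ.map_adj_iff.2 s.isParent_witness.1
  · rw [dist_apply_of_apply_eq_self hconn hr, s.dist_witness]

lemma IsAdapted.map_eq_self_of_adj (hc : s.IsAdapted base mark c) (hconn : G.Connected)
    (hC4 : Pairwise fun a b ↦ (G.commonNeighbors a b).Subsingleton) (hφ : c ∘ φ = c)
    (hr : φ r = r) {v : V} (hv : G.Adj r v) : φ v = v := by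
  have hφv : G.Adj r (φ v) := by simpa only [hr] using φ.map_adj_iff.2 hv
  rcases hc.eq_or_eq hφv hv (congrFun hφ v) with h | h
  · exact h
  rcases Sym2.eq_iff.1 h with ⟨hleft, rfl⟩ | ⟨hright, rfl⟩
  · have hφ' : c ∘ φ.symm = c := by
      funext u
      simpa only [Function.comp_apply, φ.apply_symm_apply] using (congrFun hφ (φ.symm u)).symm
    refine absurd ?_ (hc.map_left_ne_right hconn hC4 hφ' (by rw [RelIso.symm_apply_eq, hr]))
    rw [RelIso.symm_apply_eq, hleft]
  · exact absurd hright (hc.map_left_ne_right hconn hC4 hφ hr)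

theorem IsAdapted.eq_self (hc : s.IsAdapted base mark c) (hconn : G.Connected)
    (hbip : G.Colorable 2) (hC4 : Pairwise fun a b ↦ (G.commonNeighbors a b).Subsingleton)
    (hφ : c ∘ φ = c) (v : V) : φ v = v := by
  have hr := hc.map_root hconn hbip hC4 hφ
  refine eq_self_of_forall_not_isSibling hconn hC4 hr (fun v hsib ↦ ?_) v
  by_cases hrv : G.Adj r v
  · exact hsib.1 (hc.map_eq_self_of_adj hconn hC4 hφ hr hrv)
  · have hvr : v ≠ r := by
      rintro rfl
      exact hsib.1 hr
    exact hc.ne_of_isSibling (hconn.one_lt_dist_of_ne_of_not_adj hvr.symm hrv) hsib (congrFun hφ v)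

section Support

variable {h : V → C}

lemma coloring_of_adj {v : V} (hv : G.Adj r v) : s.coloring base mark h v = h v :=
  if_pos hv

lemma coloring_of_mem_marked {y : V} (hy : y ∈ s.marked) : s.coloring base mark h y = mark := by
  have hry : ¬ G.Adj r y := fun hry ↦ by
    have := s.dist_marked hy
    rw [SimpleGraph.dist_eq_one_iff_adj.2 hry] at this
    omega
  rw [coloring, if_neg hry, if_pos hy]

lemma coloring_root : s.coloring base mark h r = base := by
  have hr : r ∉ s.marked := fun hr ↦ by
    have := s.dist_marked hr
    rw [SimpleGraph.dist_self] at this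
    omega
  rw [coloring, if_neg G.irrefl, if_neg hr]

lemma coloring_witness : s.coloring base mark h s.witness = base := by
  have hdist := s.dist_witness
  have hrw : ¬ G.Adj r s.witness := fun hrw ↦ by
    rw [SimpleGraph.dist_eq_one_iff_adj.2 hrw] at hdist
    omega
  have hw : s.witness ∉ s.marked := fun hw ↦ by
    rw [s.dist_marked hw] at hdist
    omega
  rw [coloring, if_neg hrw, if_neg hw]

lemma coloring_eq_base_iff (hne : base ≠ mark) (hh : ∀ u, G.Adj r u → h u ≠ base) {v : V}
    (hv : v ∈ s.support) : s.coloring base mark h v = base ↔ v = r ∨ v = s.witness := by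
  constructor
  · intro hbase
    rcases hv with hv | hv | hv | hv
    · exact .inl hv
    · exact absurd ((coloring_of_adj hv).symm.trans hbase) (hh v hv)
    · exact .inr hv
    · exact absurd ((coloring_of_mem_marked hv).symm.trans hbase) hne.symm
  · rintro (rfl | rfl)
    exacts [coloring_root, coloring_witness]

lemma coloring_ne_of_adj (hconn : G.Connected) (hbip : G.Colorable 2) (hne : base ≠ mark)
    (hh : ∀ u, G.Adj r u → h u ≠ base) {u v : V} (hu : u ∈ s.support) (hv : v ∈ s.support)
    (huv : G.Adj u v) : s.coloring base mark h u ≠ s.coloring base mark h v := by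
  have heven : ∀ w ∈ s.support, s.coloring base mark h w = base ↔ Even (G.dist r w) := by
    intro w hw
    rw [coloring_eq_base_iff hne hh hw]
    constructor
    · rintro (rfl | rfl)
      · rw [SimpleGraph.dist_self]
        exact Even.zero
      · rw [s.dist_witness]
        exact even_two
    · intro hdist
      rcases hw with hw | hw | hw | hw
      · exact .inl hw
      · rw [SimpleGraph.dist_eq_one_iff_adj.2 hw] at hdist
        exact absurd hdist Nat.not_even_one
      · exact .inr hw
      · rw [s.dist_marked hw] at hdist
        exact absurd hdist (by decide)
  intro heq
  have hiff : Even (G.dist r u) ↔ Even (G.dist r v) := by rw [← heven u hu, ← heven v hv, heq]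
  rcases isParent_or_isParent hconn hbip huv with hpar | hpar <;>
    rw [hpar.2, Nat.even_add_one] at hiff <;> tauto

theorem isAdapted_of_eqOn_support (hconn : G.Connected) (hbip : G.Colorable 2) (hne : base ≠ mark)
    (hh : ∀ u, G.Adj r u → h u ≠ base ∧ h u ≠ mark)
    (hhinj : ∀ u, G.Adj r u → ∀ v, G.Adj r v → h u = h v →
      u = v ∨ s(u, v) = s(s.left, s.right))
    (hcs : Set.EqOn c (s.coloring base mark h) s.support)
    (hconflict : ∀ u v, (conflictGraph G r).Adj u v → v ∉ s.support → c u ≠ c v)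
    (hbase : ∀ v ∉ s.support, c v = base →
      ¬ HasUniqueParent G r v ∧ ∃ u, G.Adj v u ∧ c u = mark) :
    s.IsAdapted base mark c := by
  have hh_base : ∀ u, G.Adj r u → h u ≠ base := fun u hu ↦ (hh u hu).1
  have hadj : ∀ u, G.Adj r u → c u = h u := fun u hu ↦
    (hcs (.inr (.inl hu))).trans (coloring_of_adj hu)
  have hconflict' : ∀ u v, (conflictGraph G r).Adj u v → ¬ (u ∈ s.support ∧ v ∈ s.support) →
      c u ≠ c v := fun u v huv hsupp ↦ by
    by_cases hv : v ∈ s.support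
    · exact (hconflict v u huv.symm fun hu ↦ hsupp ⟨hu, hv⟩).symm
    · exact hconflict u v huv hv
  refine ⟨fun u v huv ↦ ?_, (hcs (.inl rfl)).trans coloring_root,
    (hcs (.inr (.inr (.inl rfl)))).trans coloring_witness,
    fun y hy ↦ (hcs (.inr (.inr (.inr hy)))).trans (coloring_of_mem_marked hy),
    fun u hu ↦ hadj u hu ▸ (hh u hu).2, fun u v hu hv huv ↦ ?_, fun u v hdist hsib ↦ ?_,
    fun v hcv hvr hvw ↦ ?_⟩
  · by_cases hsupp : u ∈ s.support ∧ v ∈ s.support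
    · rw [hcs hsupp.1, hcs hsupp.2]
      exact coloring_ne_of_adj hconn hbip hne hh_base hsupp.1 hsupp.2 huv
    · exact hconflict' u v (.inl huv) hsupp
  · exact hhinj u hu v hv (by rwa [← hadj u hu, ← hadj v hv])
  · exact hconflict' u v (.inr hsib) fun hsupp ↦
      s.not_isSibling_of_mem_support hsupp.1 hsupp.2 hdist hsib
  · refine hbase v (fun hv ↦ ?_) hcv
    rw [hcs hv, coloring_eq_base_iff hne hh_base hv] at hcv
    exact hcv.elim hvr hvw

end Support

end Coloring

lemma exists_coloring_neighborSet [G.LocallyFinite] (s : Seed G r) {C : Type*}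
    (hC : ENat.card C = G.degree r + 1) {base mark : C} (hne : base ≠ mark) :
    ∃ h : V → C, (∀ u, G.Adj r u → h u ≠ base ∧ h u ≠ mark) ∧
      ∀ u, G.Adj r u → ∀ v, G.Adj r v → h u = h v → u = v ∨ s(u, v) = s(s.left, s.right) := by
  have hcard : (G.neighborSet r).encard ≤ ({base, mark}ᶜ : Set C).encard + 1 := by
    have hcompl := Set.encard_add_encard_compl {base, mark}
    rw [Set.encard_pair hne, Set.encard_univ, hC, ← one_add_one_eq_two, add_comm, ← add_assoc]
      at hcompl
    rw [encard_neighborSet_eq_degree]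
    exact (ENat.add_le_add_iff_right ENat.one_ne_top).1 hcompl.ge
  have : Nonempty C := ⟨base⟩
  obtain ⟨h, hmaps, hinj⟩ := exists_mapsTo_eq_or_of_encard_le (G.neighborSet r).toFinite hcard
    s.adj_left s.adj_right s.left_ne_right
  exact ⟨h, fun u hu ↦ by simpa only [Set.mem_compl_iff, Set.mem_insert_iff,
    Set.mem_singleton_iff, not_or] using hmaps hu, hinj⟩

theorem exists_isAdapted [G.LocallyFinite] (s : Seed G r) (hconn : G.Connected)
    (hbip : G.Colorable 2) (hC4 : Pairwise fun a b ↦ (G.commonNeighbors a b).Subsingleton)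
    (hmax : ∀ v, G.degree v ≤ G.degree r) (hr : 3 ≤ G.degree r) {C : Type*}
    (hC : ENat.card C = G.degree r + 1) {base mark : C} (hne : base ≠ mark) :
    ∃ c, s.IsAdapted base mark c := by
  obtain ⟨h, hh, hhinj⟩ := s.exists_coloring_neighborSet hC hne
  obtain ⟨_, _, hmono⟩ := exists_linearOrder_wellFoundedLT_monotone s.priority
  obtain ⟨c, hcs, hconflict, hreluctant⟩ := exists_reluctant_greedy_coloring (conflictGraph G r)
    (s.isLowerSet_support hmono) (s.coloring base mark h) base fun v hv ↦ hC ▸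
      ENat.lt_add_one_iff (ENat.natCast_ne_top _) |>.2
        (s.encard_earlierNeighbors_le hconn hbip hC4 hmono hr hmax hv)
  have hmany : ∀ v ∉ s.support, c v = base → ¬ HasUniqueParent G r v := fun v hv hcv huniq ↦ by
    have hfew : (c '' earlierNeighbors (conflictGraph G r) v).encard < G.degree r :=
      (Set.encard_image_le _ _).trans_lt
        (s.encard_earlierNeighbors_lt_of_hasUniqueParent hconn hbip hC4 hmono hr hmax hv huniq)
    obtain ⟨a, ha, hnotMem⟩ := exists_ne_notMem_of_encard_add_one_lt (C := C)
      (hC ▸ (ENat.add_lt_add_iff_right ENat.one_ne_top).2 hfew) base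
    exact hnotMem (hreluctant v hv hcv a ha)
  refine ⟨c, isAdapted_of_eqOn_support hconn hbip hne hh hhinj hcs hconflict
    fun v hv hcv ↦ ⟨hmany v hv hcv, ?_⟩⟩
  obtain ⟨u, hu, hcu⟩ := hreluctant v hv hcv mark hne.symm
  exact ⟨u, earlierNeighbors_subset_of_not_hasUniqueParent (hmany v hv hcv) hu, hcu⟩

end Seed

theorem bipartite_girth_six_distinguishing_chromatic_general {V : Type*} (G : SimpleGraph V)
    [G.LocallyFinite] (hconn : G.Connected) (hbip : G.Colorable 2) (hgirth : 6 ≤ G.egirth) (r : V)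
    (hmax : ∀ v, G.degree v ≤ G.degree r) (hr : 3 ≤ G.degree r) :
    ∃ c : V → Fin (G.degree r + 1),
      (∀ u v : V, G.Adj u v → c u ≠ c v) ∧
      (∀ φ : G ≃g G, c ∘ φ = c → ∀ v : V, φ v = v) := by
  have hC4 := pairwise_subsingleton_commonNeighbors (lt_of_lt_of_le (by norm_num) hgirth)
  by_cases hx : ∃ x, G.dist r x = 2
  · obtain ⟨x, hx⟩ := hx
    have hnbr : (G.neighborSet r).Nontrivial := by
      rw [← Set.one_lt_encard_iff_nontrivial, encard_neighborSet_eq_degree]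
      exact_mod_cast one_lt_two.trans hr
    obtain ⟨s⟩ := exists_seed hconn hnbr hx
    have hne : (0 : Fin (G.degree r + 1)) ≠ Fin.last _ := Fin.ne_of_val_ne (by
      rw [Fin.val_zero, Fin.val_last]
      omega)
    obtain ⟨c, hc⟩ := s.exists_isAdapted hconn hbip hC4 hmax hr (by simp) hne
    exact ⟨c, fun u v huv ↦ hc.ne_of_adj huv, fun φ hφ ↦ hc.eq_self hconn hbip hC4 hφ⟩
  · push Not at hx
    obtain ⟨c, hc⟩ := exists_injective_of_forall_dist_ne_two hconn hx
    exact ⟨c, fun u v huv ↦ hc.ne huv.ne, fun φ hφ v ↦ hc (congrFun hφ v)⟩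

/-- **Theorem 2.2.** If `G` is a connected bipartite graph with girth at least six and
maximum degree `Δ ≥ 3`, then `χ_D(G) ≤ Δ + 1`: there is a proper coloring of `G` with
`Δ + 1` colors preserved by no nontrivial automorphism of `G`. -/
theorem bipartite_girth_six_distinguishing_chromatic {V : Type*} [Fintype V]
    (G : SimpleGraph V) [DecidableRel G.Adj]
    (hconn : G.Connected) (hbip : G.Colorable 2) (hgirth : 6 ≤ G.egirth)
    (hΔ : 3 ≤ G.maxDegree) :
    ∃ c : V → Fin (G.maxDegree + 1),
      (∀ u v : V, G.Adj u v → c u ≠ c v) ∧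
      (∀ φ : G ≃g G, c ∘ φ = c → ∀ v : V, φ v = v) := by
  have := hconn.nonempty
  obtain ⟨r, hr⟩ := G.exists_maximal_degree_vertex
  rw [hr] at hΔ ⊢
  exact bipartite_girth_six_distinguishing_chromatic_general G hconn hbip hgirth r
    (fun v ↦ hr ▸ G.degree_le_maxDegree v) hΔ
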